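/- arXiv:1208.1440 — 4 statements merged into one kernel-verified Lean document; each statement's English description precedes it below -/
import Mathlib

section
/- Let f and g be real polynomials of the same degree n ≥ 1 whose zeros are all real: f has zeros a_1 < a_2 < ⋯ < a_n and g has zeros b_1 < b_2 < ⋯ < b_n, and g interlaces f in the sense that b_1 < a_1 < b_2 < a_2 < ⋯ < b_n < a_n. Let α, β be real numbers with β < 0, and set F = α·f + β·g. If F has degree n and the leading coefficients of F and g have the same sign, then F has n real zeros c_1 < c_2 < ⋯ < c_n and f interlaces F: a_1 < c_1 < a_2 < c_2 < ⋯ < a_n < c_n. -/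
open Polynomial Finset

/-!
At each zero `a i` of `f` we have `F (a i) = β * g (a i)`. Exactly one zero of `g` lies between
consecutive zeros of `f`, so `g`, and hence `F`, changes sign from each `a i` to the next. Beyond
the last zero of `f` the polynomial `g` keeps the sign of its leading coefficient; since `β < 0`,
`F` has there the sign opposite to its own leading coefficient, so it changes sign once more on
the way to `+∞`. The intermediate value theorem gives a zero of `F` for each sign change.
-/

theorem prod_neg_of_neg_of_forall_ne_pos {ι R : Type*} [CommSemiring R] [PartialOrder R]
    [IsStrictOrderedRing R] {s : Finset ι} {u : ι → R} {j : ι} (hjs : j ∈ s) (hj : u j < 0)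
    (hpos : ∀ k ∈ s, k ≠ j → 0 < u k) : ∏ k ∈ s, u k < 0 := by
  classical
  rw [← mul_prod_erase s u hjs]
  exact mul_neg_of_neg_of_pos hj <|
    prod_pos fun k hk ↦ hpos k (mem_of_mem_erase hk) (ne_of_mem_erase hk)

theorem eval_of_eq_C_mul_prod_X_sub_C {ι R : Type*} [CommRing R] {s : Finset ι} {b : ι → R}
    {g : R[X]} {r : R} (hg : g = C r * ∏ k ∈ s, (X - C (b k))) (x : R) :
    g.eval x = r * ∏ k ∈ s, (x - b k) := by
  simpa only [eval_mul, eval_C, eval_prod, eval_sub, eval_X] using congrArg (eval x) hg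

/-- The finite sequence `b` interlaces `a`: the terms alternate as
`b 0 < a 0 < b 1 < a 1 < ⋯`, starting with `b`. Consecutive indices are expressed by
`i + 1 = j`, so that no successor operation on `Fin n` is needed. -/
def Interlaces {n : ℕ} {R : Type*} [LT R] (b a : Fin n → R) : Prop :=
  (∀ i, b i < a i) ∧ ∀ i j : Fin n, (i : ℕ) + 1 = (j : ℕ) → a i < b j

namespace Interlaces

section Preorder

variable {n : ℕ} {R : Type*} [Preorder R] {a b : Fin n → R} {i j : Fin n}

theorem strictMono_left (h : Interlaces b a) : StrictMono b :=
  (strictMono_iff_forall_covBy b).2 fun i j hij ↦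
    (h.1 i).trans <| h.2 i j <| Order.succ_eq_of_covBy <| Fin.covBy_iff.1 hij

theorem strictMono_right (h : Interlaces b a) : StrictMono a :=
  (strictMono_iff_forall_covBy a).2 fun i j hij ↦
    (h.2 i j <| Order.succ_eq_of_covBy <| Fin.covBy_iff.1 hij).trans (h.1 j)

theorem left_lt_right_of_le (h : Interlaces b a) (hij : i ≤ j) : b i < a j :=
  (h.1 i).trans_le (h.strictMono_right.monotone hij)

theorem right_lt_left_of_lt (h : Interlaces b a) (hij : i < j) : a i < b j :=
  have hsucc : (i : ℕ) + 1 ≤ j := hij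
  (h.2 i ⟨i + 1, hsucc.trans_lt j.2⟩ rfl).trans_le (h.strictMono_left.monotone hsucc)

end Preorder

section OrderedRing

variable {n : ℕ} {R : Type*} [CommRing R] [LinearOrder R] [IsStrictOrderedRing R]
  {a b : Fin n → R} {i j : Fin n}

theorem prod_sub_mul_prod_sub_neg (h : Interlaces b a) (hij : (i : ℕ) + 1 = j) :
    (∏ k, (a i - b k)) * ∏ k, (a j - b k) < 0 := by
  have hlt : i < j := Fin.lt_def.2 (by lia)
  rw [← prod_mul_distrib]
  refine prod_neg_of_neg_of_forall_ne_pos (mem_univ j) ?_ fun k _ hkj ↦ ?_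
  · exact mul_neg_of_neg_of_pos (sub_neg.2 (h.2 i j hij)) (sub_pos.2 (h.1 j))
  · rcases hkj.lt_or_gt with hkj | hjk
    · have hki : k ≤ i := Fin.le_def.2 (by lia)
      exact mul_pos (sub_pos.2 (h.left_lt_right_of_le hki))
        (sub_pos.2 (h.left_lt_right_of_le hkj.le))
    · exact mul_pos_of_neg_of_neg (sub_neg.2 (h.right_lt_left_of_lt (hlt.trans hjk)))
        (sub_neg.2 (h.right_lt_left_of_lt hjk))

theorem prod_sub_pos_of_last (h : Interlaces b a) (hi : (i : ℕ) + 1 = n) :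
    0 < ∏ k, (a i - b k) :=
  prod_pos fun k _ ↦ sub_pos.2 <| h.left_lt_right_of_le <| Fin.le_def.2 (by lia)

variable {g : R[X]}

theorem eval_mul_eval_neg (h : Interlaces b a) (hg0 : g ≠ 0)
    (hg : g = C g.leadingCoeff * ∏ k, (X - C (b k))) (hij : (i : ℕ) + 1 = j) :
    g.eval (a i) * g.eval (a j) < 0 := by
  have hlc : 0 < g.leadingCoeff * g.leadingCoeff :=
    mul_self_pos.2 (leadingCoeff_ne_zero.2 hg0)
  calc g.eval (a i) * g.eval (a j)
      = g.leadingCoeff * g.leadingCoeff * ((∏ k, (a i - b k)) * ∏ k, (a j - b k)) := by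
        rw [eval_of_eq_C_mul_prod_X_sub_C hg, eval_of_eq_C_mul_prod_X_sub_C hg,
          mul_mul_mul_comm]
    _ < 0 := mul_neg_of_pos_of_neg hlc (h.prod_sub_mul_prod_sub_neg hij)

theorem leadingCoeff_mul_eval_pos_of_last (h : Interlaces b a) (hg0 : g ≠ 0)
    (hg : g = C g.leadingCoeff * ∏ k, (X - C (b k))) (hi : (i : ℕ) + 1 = n) :
    0 < g.leadingCoeff * g.eval (a i) := by
  rw [eval_of_eq_C_mul_prod_X_sub_C hg, ← mul_assoc]
  exact mul_pos (mul_self_pos.2 (leadingCoeff_ne_zero.2 hg0)) (h.prod_sub_pos_of_last hi)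

end OrderedRing

end Interlaces

section RealPolynomial

variable {p : ℝ[X]} {x y : ℝ}

theorem exists_isRoot_mem_Ioo_of_eval_mul_eval_neg (hxy : x < y)
    (h : p.eval x * p.eval y < 0) : ∃ c ∈ Set.Ioo x y, p.IsRoot c := by
  rcases mul_neg_iff.1 h with ⟨hx, hy⟩ | ⟨hx, hy⟩
  · exact intermediate_value_Ioo' hxy.le p.continuousOn ⟨hy, hx⟩
  · exact intermediate_value_Ioo hxy.le p.continuousOn ⟨hx, hy⟩

theorem eventually_atTop_leadingCoeff_mul_eval_pos (hp : p ≠ 0) :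
    ∀ᶠ x in Filter.atTop, 0 < p.leadingCoeff * p.eval x := by
  have hlc : 0 < p.leadingCoeff * p.leadingCoeff := mul_self_pos.2 (leadingCoeff_ne_zero.2 hp)
  rcases le_or_gt p.degree 0 with hconst | hdeg
  · refine .of_forall fun x ↦ ?_
    rw [eq_C_of_degree_le_zero hconst] at hlc ⊢
    simpa only [leadingCoeff_C, eval_C] using hlc
  · have htendsto := (C p.leadingCoeff * p).tendsto_atTop_of_leadingCoeff_nonneg
      (by rwa [degree_C_mul (leadingCoeff_ne_zero.2 hp)])
      (by simpa only [leadingCoeff_mul, leadingCoeff_C] using hlc.le)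
    simpa only [eval_mul, eval_C] using htendsto.eventually_gt_atTop 0

theorem exists_isRoot_gt_of_leadingCoeff_mul_eval_neg (h : p.leadingCoeff * p.eval x < 0) :
    ∃ c, x < c ∧ p.IsRoot c := by
  have hp : p ≠ 0 := by
    rintro rfl
    simp at h
  obtain ⟨y, hy, hxy⟩ := ((eventually_atTop_leadingCoeff_mul_eval_pos hp).and
    (Filter.eventually_gt_atTop x)).exists
  have hsign : p.eval x * p.eval y < 0 := by
    refine neg_of_mul_neg_right (a := p.leadingCoeff * p.leadingCoeff) ?_ (mul_self_nonneg _)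
    simpa only [mul_mul_mul_comm] using mul_neg_of_neg_of_pos h hy
  obtain ⟨c, hc, hroot⟩ := exists_isRoot_mem_Ioo_of_eval_mul_eval_neg hxy hsign
  exact ⟨c, hc.1, hroot⟩

theorem exists_interlaces_isRoot_of_sign_changes {n : ℕ} {a : Fin n → ℝ} (ha : StrictMono a)
    (hstep : ∀ i j : Fin n, (i : ℕ) + 1 = j → p.eval (a i) * p.eval (a j) < 0)
    (hlast : ∀ i : Fin n, (i : ℕ) + 1 = n → p.leadingCoeff * p.eval (a i) < 0) :
    ∃ c : Fin n → ℝ, (∀ i, p.IsRoot (c i)) ∧ Interlaces a c := by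
  have hroot (i : Fin n) :
      ∃ c, p.IsRoot c ∧ a i < c ∧ ∀ j : Fin n, (i : ℕ) + 1 = j → c < a j := by
    rcases (Nat.succ_le_of_lt i.2).lt_or_eq with hi | hi
    · let next : Fin n := ⟨i + 1, hi⟩
      have hnext : i < next := Nat.lt_succ_self i
      obtain ⟨c, hc, hpc⟩ :=
        exists_isRoot_mem_Ioo_of_eval_mul_eval_neg (ha hnext) (hstep i next rfl)
      refine ⟨c, hpc, hc.1, fun j hj ↦ ?_⟩
      rw [show j = next from Fin.ext hj.symm]
      exact hc.2
    · obtain ⟨c, hc, hpc⟩ := exists_isRoot_gt_of_leadingCoeff_mul_eval_neg (hlast i hi)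
      exact ⟨c, hpc, hc, fun j hj ↦ by lia⟩
  choose c hpc hac hca using hroot
  exact ⟨c, hpc, hac, hca⟩

end RealPolynomial

theorem interlacing_combination_general {n : ℕ} {f g F : ℝ[X]} {a b : Fin n → ℝ}
    (hfa : ∀ i, f.IsRoot (a i)) (hg : g = C g.leadingCoeff * ∏ i, (X - C (b i)))
    (hinter : Interlaces b a) {α β : ℝ} (hβ : β < 0) (hF : F = C α * f + C β * g)
    (hsign : 0 < F.leadingCoeff * g.leadingCoeff) :
    ∃ c : Fin n → ℝ, StrictMono c ∧ (∀ i, F.IsRoot (c i)) ∧ Interlaces a c := by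
  have hg0 : g ≠ 0 := leadingCoeff_ne_zero.1 (right_ne_zero_of_mul hsign.ne')
  have hFa (i : Fin n) : F.eval (a i) = β * g.eval (a i) := by
    simp only [hF, eval_add, eval_mul, eval_C, (hfa i).eq_zero, mul_zero, zero_add]
  have hstep (i j : Fin n) (hij : (i : ℕ) + 1 = j) : F.eval (a i) * F.eval (a j) < 0 := by
    rw [hFa, hFa, mul_mul_mul_comm]
    exact mul_neg_of_pos_of_neg (mul_self_pos.2 hβ.ne) (hinter.eval_mul_eval_neg hg0 hg hij)
  have hlast (i : Fin n) (hi : (i : ℕ) + 1 = n) : F.leadingCoeff * F.eval (a i) < 0 := by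
    have hglast := hinter.leadingCoeff_mul_eval_pos_of_last hg0 hg hi
    have hsame : 0 < F.leadingCoeff * g.eval (a i) := by
      refine pos_of_mul_pos_right (a := g.leadingCoeff * g.leadingCoeff) ?_ (mul_self_nonneg _)
      linarith [mul_pos hsign hglast]
    rw [hFa, mul_left_comm]
    exact mul_neg_of_neg_of_pos hβ hsame
  obtain ⟨c, hroot, hac⟩ :=
    exists_interlaces_isRoot_of_sign_changes hinter.strictMono_right hstep hlast
  exact ⟨c, hac.strictMono_right, hroot, hac⟩

/-- If `g` interlaces `f` (zeros `b₁ < a₁ < b₂ < ⋯ < bₙ < aₙ`) and `F = α f + β g` with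
`β < 0` has degree `n` and leading coefficient of the same sign as that of `g`, then `F`
has `n` real zeros which `f` interlaces: `a₁ < c₁ < a₂ < ⋯ < aₙ < cₙ`. -/
theorem interlacing_combination (n : ℕ) (hn : 1 ≤ n) (f g : Polynomial ℝ)
    (a b : Fin n → ℝ) (ha : StrictMono a) (hb : StrictMono b)
    (hf : f = Polynomial.C f.leadingCoeff * ∏ i : Fin n, (Polynomial.X - Polynomial.C (a i)))
    (hg : g = Polynomial.C g.leadingCoeff * ∏ i : Fin n, (Polynomial.X - Polynomial.C (b i)))
    (hfdeg : f.degree = n) (hgdeg : g.degree = n)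
    (hinter : (∀ i, b i < a i) ∧ ∀ i j : Fin n, (i : ℕ) + 1 = (j : ℕ) → a i < b j)
    (α β : ℝ) (hβ : β < 0) (F : Polynomial ℝ)
    (hF : F = Polynomial.C α * f + Polynomial.C β * g)
    (hFdeg : F.degree = n) (hsign : 0 < F.leadingCoeff * g.leadingCoeff) :
    ∃ c : Fin n → ℝ, StrictMono c ∧ (∀ i, F.IsRoot (c i)) ∧
      (∀ i, a i < c i) ∧ ∀ i j : Fin n, (i : ℕ) + 1 = (j : ℕ) → c i < a j := by
  have hfa (i : Fin n) : f.IsRoot (a i) := by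
    rw [IsRoot, eval_of_eq_C_mul_prod_X_sub_C hf, prod_eq_zero (mem_univ i) (sub_self _),
      mul_zero]
  exact interlacing_combination_general hfa hg hinter hβ hF hsign
end

section
/- For every natural number n ≥ 1 and every complex s with Re(s) > 0 and s ≠ 1, ∫_0^∞ x^{n−2+s} · (d^n/dx^n)( x/(e^x − 1) ) dx = (−1)^n (s − 1) Γ(n − 1 + s) ζ(s), where the integrand involves the n-th derivative of the function x ↦ x/(e^x − 1) on (0, ∞). -/
open Complex Real MeasureTheory

/-!
Write `f x = x / (e ^ x - 1)`. Summing the geometric series gives the Mellin transform of `f`: it is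
`Γ(s + 1) ζ(s + 1) = Γ(s) · s ζ(s + 1)` for `0 < Re s`. If a function has Mellin transform
`Γ(s) G(s)` with `G` entire, integration by parts shows that its derivative has Mellin transform
`-Γ(s) G(s - 1)` for `1 < Re s`; both sides are holomorphic on `0 < Re s`, so the formula holds
there as well. Iterating, the Mellin transform of `f⁽ⁿ⁾` is `(-1)ⁿ Γ(s) (s - n) ζ(s + 1 - n)` for
`0 < Re s`. Cauchy's estimates for the extension of `f` to the strip `|Im z| < 2π` provide the decay
of all derivatives.
-/

open Set Filter Asymptotics Topology

section ComplexAnalysis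

variable {E : Type*} [NormedAddCommGroup E] [NormedSpace ℂ E] [CompleteSpace E]

theorem eqOn_re_gt_of_differentiableOn {g h : ℂ → E} {b c : ℝ}
    (hg : DifferentiableOn ℂ g {z | b < z.re}) (hh : DifferentiableOn ℂ h {z | b < z.re})
    (hgh : EqOn g h {z | c < z.re}) : EqOn g h {z | b < z.re} := by
  have hopen (r : ℝ) : IsOpen {z : ℂ | r < z.re} := isOpen_lt continuous_const continuous_re
  obtain ⟨r, hr⟩ := exists_gt (max b c)
  refine (hg.analyticOnNhd (hopen b)).eqOn_of_preconnected_of_eventuallyEq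
    (hh.analyticOnNhd (hopen b)) (convex_halfSpace_re_gt b).isPreconnected (z₀ := (r : ℂ))
    ((le_max_left b c).trans_lt hr) ?_
  exact hgh.eventuallyEq_of_mem ((hopen c).mem_nhds ((le_max_right b c).trans_lt hr))

theorem differentiableAt_Gamma_of_re_pos {s : ℂ} (hs : 0 < s.re) :
    DifferentiableAt ℂ Complex.Gamma s := by
  refine Complex.differentiableAt_Gamma s ?_
  rintro m rfl
  simp only [neg_re, natCast_re, Left.neg_pos_iff] at hs
  exact hs.not_ge m.cast_nonneg

theorem isBigO_exp_iteratedDeriv_of_norm_le {F : ℂ → E} {a b C R : ℝ} (hR : 0 < R)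
    (hF : DifferentiableOn ℂ F {z | b ≤ z.re ∧ |z.im| ≤ R})
    (hC : ∀ z : ℂ, b ≤ z.re → |z.im| ≤ R → ‖F z‖ ≤ C * Real.exp (-a * z.re)) (n : ℕ) :
    (fun x : ℝ => iteratedDeriv n F x) =O[atTop] fun x => Real.exp (-a * x) := by
  refine IsBigO.of_bound (n.factorial * (|C| * Real.exp (|a| * R)) / R ^ n) ?_
  filter_upwards [eventually_ge_atTop (b + R)] with x hx
  have hball : Metric.closedBall (x : ℂ) R ⊆ {z | b ≤ z.re ∧ |z.im| ≤ R} := fun z hz => by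
    rw [mem_closedBall_iff_norm] at hz
    have hre := neg_le_of_abs_le ((abs_re_le_norm (z - x)).trans hz)
    have him := (abs_im_le_norm (z - x)).trans hz
    simp only [sub_re, ofReal_re, sub_im, ofReal_im, sub_zero] at hre him
    exact ⟨by linarith, him⟩
  have hsphere : ∀ z ∈ Metric.sphere (x : ℂ) R,
      ‖F z‖ ≤ |C| * Real.exp (|a| * R) * Real.exp (-a * x) := fun z hz => by
    obtain ⟨hre, him⟩ := hball (Metric.sphere_subset_closedBall hz)
    have hexponent : -a * z.re ≤ |a| * R + -a * x := by
      have hdist : |z.re - x| ≤ R := by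
        simpa using (abs_re_le_norm (z - x)).trans (mem_sphere_iff_norm.1 hz).le
      have hmul : |-a * (z.re - x)| ≤ |a| * R := by
        rw [abs_mul, abs_neg]
        gcongr
      linarith [le_of_abs_le hmul]
    calc ‖F z‖ ≤ C * Real.exp (-a * z.re) := hC z hre him
      _ ≤ |C| * Real.exp (|a| * R + -a * x) := by gcongr; exact le_abs_self C
      _ = |C| * Real.exp (|a| * R) * Real.exp (-a * x) := by rw [Real.exp_add, mul_assoc]
  have hcauchy := norm_iteratedDeriv_le_of_forall_mem_sphere_norm_le n hR
    ((hF.mono (closure_ball (x : ℂ) hR.ne' ▸ hball)).diffContOnCl) hsphere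
  rw [Real.norm_of_nonneg (Real.exp_pos _).le]
  exact hcauchy.trans_eq (by ring)

theorem ofReal_deriv_eq_deriv {F : ℂ → ℂ} {f : ℝ → ℝ} {x : ℝ} (hF : DifferentiableAt ℂ F x)
    (hfF : ∀ᶠ t : ℝ in 𝓝 x, (f t : ℂ) = F t) : ((deriv f x : ℝ) : ℂ) = deriv F x := by
  have hf : HasDerivAt f (deriv F x).re x :=
    hF.hasDerivAt.real_of_complex.congr_of_eventuallyEq (hfF.mono fun t ht => by simp [← ht])
  rw [hf.deriv]
  exact hf.ofReal_comp.unique (hF.hasDerivAt.comp_ofReal.congr_of_eventuallyEq hfF)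

theorem ofReal_iteratedDeriv_eq_iteratedDeriv {U : Set ℝ} (hU : IsOpen U) {F : ℂ → ℂ} {f : ℝ → ℝ}
    (hF : ∀ x ∈ U, AnalyticAt ℂ F x) (hfF : ∀ x ∈ U, (f x : ℂ) = F x) (n : ℕ) {x : ℝ}
    (hx : x ∈ U) : ((iteratedDeriv n f x : ℝ) : ℂ) = iteratedDeriv n F x := by
  induction n generalizing F f with
  | zero => simpa using hfF x hx
  | succ n ih =>
    rw [iteratedDeriv_succ', iteratedDeriv_succ']
    exact ih (fun y hy => (hF y hy).deriv) fun y hy =>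
      ofReal_deriv_eq_deriv (hF y hy).differentiableAt (eventually_of_mem (hU.mem_nhds hy) hfF)

end ComplexAnalysis

section Mellin

variable {E : Type*} [NormedAddCommGroup E] [NormedSpace ℂ E] {f f' : ℝ → ℂ} {a : ℝ} {s : ℂ}

theorem mellinConvergent_of_continuousOn_of_isBigO_exp {f : ℝ → E} (ha : 0 < a)
    (hf : ContinuousOn f (Ici 0)) (hf_top : f =O[atTop] fun t => Real.exp (-a * t))
    (hs : 0 < s.re) : MellinConvergent f s :=
  mellinConvergent_of_isBigO_rpow_exp (b := 0) ha
    ((hf.mono Ioi_subset_Ici_self).locallyIntegrableOn measurableSet_Ioi) hf_top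
    (by simpa using ((hf 0 self_mem_Ici).mono Ioi_subset_Ici_self).isBigO_one ℝ) hs

theorem differentiableAt_mellin_of_continuousOn_of_isBigO_exp {f : ℝ → E} (ha : 0 < a)
    (hf : ContinuousOn f (Ici 0)) (hf_top : f =O[atTop] fun t => Real.exp (-a * t))
    (hs : 0 < s.re) : DifferentiableAt ℂ (mellin f) s :=
  mellin_differentiableAt_of_isBigO_rpow_exp (b := 0) ha
    ((hf.mono Ioi_subset_Ici_self).locallyIntegrableOn measurableSet_Ioi) hf_top
    (by simpa using ((hf 0 self_mem_Ici).mono Ioi_subset_Ici_self).isBigO_one ℝ) hs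

theorem mellin_add_one_of_hasDerivAt (hderiv : ∀ x ∈ Ioi 0, HasDerivAt f (f' x) x)
    (hf : MellinConvergent f s) (hf' : MellinConvergent f' (s + 1))
    (h_zero : Tendsto (fun x : ℝ => (x : ℂ) ^ s * f x) (𝓝[>] 0) (𝓝 0))
    (h_top : Tendsto (fun x : ℝ => (x : ℂ) ^ s * f x) atTop (𝓝 0)) :
    mellin f' (s + 1) = -s * mellin f s := by
  have hpow : ∀ x ∈ Ioi (0 : ℝ),
      HasDerivAt (fun x : ℝ => (x : ℂ) ^ s) (s * (x : ℂ) ^ (s - 1)) x := fun x hx => by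
    have hid := hasDerivAt_id (x : ℂ)
    simpa using (hid.cpow_const (c := s) (ofReal_mem_slitPlane.2 hx)).comp_ofReal
  have hparts := integral_Ioi_mul_deriv_eq_deriv_mul hpow hderiv
    (by simpa only [MellinConvergent, add_sub_cancel_right] using! hf')
    (by simpa only [smul_eq_mul, ← mul_assoc] using! hf.const_mul s) h_zero h_top
  simpa [mellin, mul_assoc, integral_const_mul] using hparts

theorem tendsto_cpow_mul_nhdsGT_zero (hf : ContinuousOn f (Ici 0)) (hs : 0 < s.re) :
    Tendsto (fun x : ℝ => (x : ℂ) ^ s * f x) (𝓝[>] 0) (𝓝 0) := by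
  have hs0 : s ≠ 0 := by rintro rfl; simp at hs
  have hpow : Tendsto (fun x : ℝ => (x : ℂ) ^ s) (𝓝[>] 0) (𝓝 0) := by
    simpa [hs0] using (continuousAt_ofReal_cpow_const 0 s (Or.inl hs)).continuousWithinAt.tendsto
  simpa using hpow.mul ((hf 0 self_mem_Ici).mono Ioi_subset_Ici_self).tendsto

theorem tendsto_cpow_mul_atTop_of_isBigO_exp (ha : 0 < a)
    (hf_top : f =O[atTop] fun t => Real.exp (-a * t)) (s : ℂ) :
    Tendsto (fun x : ℝ => (x : ℂ) ^ s * f x) atTop (𝓝 0) := by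
  have hpow : (fun x : ℝ => (x : ℂ) ^ s) =O[atTop] fun x : ℝ => x ^ s.re :=
    IsBigO.of_bound' <| (eventually_gt_atTop 0).mono fun x hx => by
      rw [norm_cpow_eq_rpow_re_of_pos hx]
      exact le_norm_self _
  exact (hpow.mul hf_top).trans_tendsto (tendsto_rpow_mul_exp_neg_mul_atTop_nhds_zero s.re a ha)

theorem mellin_eq_neg_Gamma_mul_of_hasDerivAt {G : ℂ → ℂ} (ha : 0 < a)
    (hf : ContinuousOn f (Ici 0)) (hf' : ContinuousOn f' (Ici 0))
    (hf_top : f =O[atTop] fun t => Real.exp (-a * t))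
    (hf'_top : f' =O[atTop] fun t => Real.exp (-a * t))
    (hderiv : ∀ x ∈ Ioi 0, HasDerivAt f (f' x) x) (hG : Differentiable ℂ G)
    (hmellin : ∀ w : ℂ, 0 < w.re → mellin f w = Complex.Gamma w * G w) (hs : 0 < s.re) :
    mellin f' s = -(Complex.Gamma s * G (s - 1)) := by
  have hleft : DifferentiableOn ℂ (mellin f') {w | 0 < w.re} := fun w hw =>
    (differentiableAt_mellin_of_continuousOn_of_isBigO_exp ha hf' hf'_top
      hw).differentiableWithinAt
  have hright : DifferentiableOn ℂ (fun w => -(Complex.Gamma w * G (w - 1))) {w | 0 < w.re} :=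
    fun w hw => ((differentiableAt_Gamma_of_re_pos hw).mul
      (hG.comp (differentiable_id.sub_const 1) w)).neg.differentiableWithinAt
  suffices hlarge : ∀ w : ℂ, 1 < w.re → mellin f' w = -(Complex.Gamma w * G (w - 1)) from
    eqOn_re_gt_of_differentiableOn hleft hright hlarge hs
  intro w hw
  have hw_pos : 0 < (w - 1).re := by simpa using hw
  have hw_ne : w - 1 ≠ 0 := fun h => by simp [h] at hw_pos
  have hparts := mellin_add_one_of_hasDerivAt hderiv
    (mellinConvergent_of_continuousOn_of_isBigO_exp ha hf hf_top hw_pos)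
    (mellinConvergent_of_continuousOn_of_isBigO_exp ha hf' hf'_top
      (by simpa using zero_lt_one.trans hw))
    (tendsto_cpow_mul_nhdsGT_zero hf hw_pos) (tendsto_cpow_mul_atTop_of_isBigO_exp ha hf_top _)
  have hGamma := Complex.Gamma_add_one (w - 1) hw_ne
  rw [sub_add_cancel] at hparts hGamma
  rw [hparts, hmellin _ hw_pos, hGamma]
  ring

theorem mellin_eq_neg_one_pow_mul_Gamma_mul {D : ℕ → ℝ → ℂ} {G : ℂ → ℂ} (ha : 0 < a)
    (hD : ∀ n, ContinuousOn (D n) (Ici 0))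
    (hD_top : ∀ n, D n =O[atTop] fun t => Real.exp (-a * t))
    (hderiv : ∀ n, ∀ x ∈ Ioi 0, HasDerivAt (D n) (D (n + 1) x) x) (hG : Differentiable ℂ G)
    (hmellin : ∀ w : ℂ, 0 < w.re → mellin (D 0) w = Complex.Gamma w * G w) (n : ℕ)
    (hs : 0 < s.re) : mellin (D n) s = (-1) ^ n * Complex.Gamma s * G (s - n) := by
  induction n generalizing s with
  | zero => simpa using hmellin s hs
  | succ n ih =>
    have hG_n : Differentiable ℂ fun w => (-1) ^ n * G (w - n) :=
      (hG.comp (differentiable_id.sub_const _)).const_mul _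
    rw [mellin_eq_neg_Gamma_mul_of_hasDerivAt ha (hD n) (hD (n + 1)) (hD_top n) (hD_top (n + 1))
      (hderiv n) hG_n (fun w hw => by rw [ih hw]; ring) hs, sub_sub, Nat.cast_succ, add_comm 1]
    ring

end Mellin

section BernoulliGen

/-- The exponential generating function `z / (e ^ z - 1)` of the Bernoulli numbers, which extends
the function `x / (e ^ x - 1)` of a positive real variable to the strip `|Im z| < 2π`. Inverting
the divided slope of `exp` gives it the value `1` at `z = 0`, where the quotient would be
`0 / 0 = 0`. -/
noncomputable def bernoulliGen (z : ℂ) : ℂ := (dslope Complex.exp 0 z)⁻¹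

theorem bernoulliGen_of_ne_zero {z : ℂ} (hz : z ≠ 0) :
    bernoulliGen z = z / (Complex.exp z - 1) := by
  simp [bernoulliGen, dslope_of_ne _ hz, slope_def_field]

theorem eq_zero_of_exp_eq_one_of_abs_im_lt {z : ℂ} (hz : |z.im| < 2 * π)
    (hexp : Complex.exp z = 1) : z = 0 := by
  obtain ⟨k, rfl⟩ := Complex.exp_eq_one_iff.1 hexp
  have hk : |(k : ℝ)| < 1 := by
    have him : |(k : ℝ)| * (2 * π) < 1 * (2 * π) := by simpa [abs_mul, abs_of_pos pi_pos] using hz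
    exact lt_of_mul_lt_mul_right him two_pi_pos.le
  have hk_zero : k = 0 := Int.abs_lt_one_iff.1 (by exact_mod_cast hk)
  simp [hk_zero]

theorem dslope_exp_zero_ne_zero {z : ℂ} (hz : |z.im| < 2 * π) : dslope Complex.exp 0 z ≠ 0 := by
  rcases eq_or_ne z 0 with rfl | hz_ne
  · simp
  · have hexp : Complex.exp z - 1 ≠ 0 :=
      sub_ne_zero.2 fun h => hz_ne (eq_zero_of_exp_eq_one_of_abs_im_lt hz h)
    simpa [dslope_of_ne _ hz_ne, slope_def_field] using ⟨hexp, hz_ne⟩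

theorem analyticAt_bernoulliGen {z : ℂ} (hz : |z.im| < 2 * π) : AnalyticAt ℂ bernoulliGen z := by
  have hdslope : Differentiable ℂ (dslope Complex.exp 0) := by
    rw [← differentiableOn_univ, Complex.differentiableOn_dslope univ_mem]
    exact Complex.differentiable_exp.differentiableOn
  exact (hdslope.analyticAt z).inv (dslope_exp_zero_ne_zero hz)

theorem analyticAt_bernoulliGen_ofReal (x : ℝ) : AnalyticAt ℂ bernoulliGen x :=
  analyticAt_bernoulliGen (by simp [pi_pos])

theorem hasDerivAt_iteratedDeriv_bernoulliGen_ofReal (n : ℕ) (x : ℝ) :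
    HasDerivAt (fun t : ℝ => iteratedDeriv n bernoulliGen t)
      (iteratedDeriv (n + 1) bernoulliGen x) x := by
  rw [iteratedDeriv_succ, iteratedDeriv_eq_iterate]
  have hanalytic := (analyticAt_bernoulliGen_ofReal x).iterated_deriv n
  exact hanalytic.differentiableAt.hasDerivAt.comp_ofReal

theorem norm_bernoulliGen_le {z : ℂ} (hre : 1 ≤ z.re) (him : |z.im| ≤ 1) :
    ‖bernoulliGen z‖ ≤ 4 * Real.exp (-(1 / 2) * z.re) := by
  have hz : z ≠ 0 := by rintro rfl; norm_num at hre
  have hnum : ‖z‖ ≤ 2 * Real.exp (z.re / 2) := by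
    have hnorm := norm_le_abs_re_add_abs_im z
    rw [abs_of_nonneg (zero_le_one.trans hre)] at hnorm
    linarith [Real.add_one_le_exp (z.re / 2)]
  have hden : Real.exp z.re / 2 ≤ ‖Complex.exp z - 1‖ := by
    have hnorm := norm_sub_norm_le (Complex.exp z) 1
    rw [norm_exp, norm_one] at hnorm
    linarith [Real.add_one_le_exp z.re]
  calc ‖bernoulliGen z‖ = ‖z‖ / ‖Complex.exp z - 1‖ := by
        rw [bernoulliGen_of_ne_zero hz, norm_div]
    _ ≤ 2 * Real.exp (z.re / 2) / (Real.exp z.re / 2) := by gcongr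
    _ = 4 * (Real.exp (z.re / 2) / Real.exp z.re) := by ring
    _ = 4 * Real.exp (-(1 / 2) * z.re) := by rw [← Real.exp_sub]; ring_nf

theorem isBigO_exp_iteratedDeriv_bernoulliGen (n : ℕ) :
    (fun x : ℝ => iteratedDeriv n bernoulliGen x) =O[atTop]
      fun x => Real.exp (-(1 / 2) * x) := by
  refine isBigO_exp_iteratedDeriv_of_norm_le one_pos ?_ (fun _ => norm_bernoulliGen_le) n
  rintro z ⟨-, him⟩
  have hstrip : |z.im| < 2 * π := by linarith [pi_gt_three]
  exact (analyticAt_bernoulliGen hstrip).differentiableAt.differentiableWithinAt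

theorem ofReal_iteratedDeriv_div_exp_sub_one (n : ℕ) {x : ℝ} (hx : 0 < x) :
    ((iteratedDeriv n (fun t : ℝ => t / (Real.exp t - 1)) x : ℝ) : ℂ) =
      iteratedDeriv n bernoulliGen x :=
  ofReal_iteratedDeriv_eq_iteratedDeriv isOpen_Ioi
    (fun y _ => analyticAt_bernoulliGen_ofReal y)
    (fun y hy => by simp [bernoulliGen_of_ne_zero (ofReal_ne_zero.2 (ne_of_gt hy))]) n hx

end BernoulliGen

section Zeta

theorem hasSum_exp_neg_nat_add_one_mul {t : ℝ} (ht : 0 < t) :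
    HasSum (fun k : ℕ => Real.exp (-(k + 1) * t)) (1 / (Real.exp t - 1)) := by
  have hterm (k : ℕ) : Real.exp (-t) * Real.exp (-t) ^ k = Real.exp (-(k + 1) * t) := by
    rw [← Real.exp_nat_mul, ← Real.exp_add]
    ring_nf
  have hsum : Real.exp (-t) * (1 - Real.exp (-t))⁻¹ = 1 / (Real.exp t - 1) := by
    rw [Real.exp_neg, ← mul_inv, mul_sub, mul_one, mul_inv_cancel₀ (Real.exp_ne_zero t), one_div]
  simpa only [hterm, hsum] using (hasSum_geometric_of_lt_one (Real.exp_pos (-t)).le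
    (Real.exp_lt_one_iff.2 (neg_lt_zero.2 ht))).mul_left (Real.exp (-t))

theorem mellin_one_div_exp_sub_one {s : ℂ} (hs : 1 < s.re) :
    mellin (fun t : ℝ => ((1 / (Real.exp t - 1) : ℝ) : ℂ)) s =
      Complex.Gamma s * riemannZeta s := by
  have hsum := hasSum_mellin (a := fun _ : ℕ => 1) (p := fun k => (k : ℝ) + 1)
    (F := fun t : ℝ => ((1 / (Real.exp t - 1) : ℝ) : ℂ)) (fun k => Or.inr (by positivity))
    (zero_lt_one.trans hs)
    (fun t ht => by simpa only [one_mul] using hasSum_ofReal.2 (hasSum_exp_neg_nat_add_one_mul ht))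
    (by simpa using (summable_nat_add_iff 1).2 (Real.summable_one_div_nat_rpow.2 hs))
  rw [← hsum.tsum_eq, zeta_eq_tsum_one_div_nat_add_one_cpow hs, ← tsum_mul_left]
  exact tsum_congr fun k => by push_cast; ring

theorem sub_one_mul_riemannZeta {s : ℂ} (hs : s ≠ 1) :
    (s - 1) * riemannZeta s = riemannZeta₁ s := by
  rw [riemannZeta_eq_inv_sub_mul hs, mul_inv_cancel_left₀ (sub_ne_zero.2 hs)]

theorem mellin_bernoulliGen {s : ℂ} (hs : 0 < s.re) :
    mellin (fun t : ℝ => bernoulliGen t) s = Complex.Gamma s * riemannZeta₁ (s + 1) := by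
  have hs_ne : s ≠ 0 := by rintro rfl; simp at hs
  calc mellin (fun t : ℝ => bernoulliGen t) s
      = mellin (fun t : ℝ => (t : ℂ) ^ (1 : ℂ) • ((1 / (Real.exp t - 1) : ℝ) : ℂ)) s := by
        refine setIntegral_congr_fun measurableSet_Ioi fun t (ht : 0 < t) => ?_
        simp [bernoulliGen_of_ne_zero (ofReal_ne_zero.2 ht.ne'), div_eq_mul_inv]
    _ = Complex.Gamma (s + 1) * riemannZeta (s + 1) := by
        rw [mellin_cpow_smul, mellin_one_div_exp_sub_one (by simpa using hs)]
    _ = Complex.Gamma s * riemannZeta₁ (s + 1) := by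
        rw [← sub_one_mul_riemannZeta (by simpa using hs_ne), Complex.Gamma_add_one s hs_ne]
        ring

theorem mellin_iteratedDeriv_bernoulliGen (n : ℕ) {s : ℂ} (hs : 0 < s.re) :
    mellin (fun t : ℝ => iteratedDeriv n bernoulliGen t) s =
      (-1) ^ n * Complex.Gamma s * riemannZeta₁ (s - n + 1) :=
  mellin_eq_neg_one_pow_mul_Gamma_mul (D := fun n t => iteratedDeriv n bernoulliGen t)
    (G := fun w => riemannZeta₁ (w + 1)) one_half_pos
    (fun k x _ =>
      (hasDerivAt_iteratedDeriv_bernoulliGen_ofReal k x).continuousAt.continuousWithinAt)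
    isBigO_exp_iteratedDeriv_bernoulliGen
    (fun k x _ => hasDerivAt_iteratedDeriv_bernoulliGen_ofReal k x) (by fun_prop)
    (fun w hw => by simpa only [iteratedDeriv_zero] using mellin_bernoulliGen hw) n hs

end Zeta

theorem integral_iteratedDeriv_zeta_general (n : ℕ) (s : ℂ) (hs : 1 - n < s.re) (hs1 : s ≠ 1) :
    ∫ x in Set.Ioi (0 : ℝ),
        (x : ℂ) ^ ((n : ℂ) - 2 + s) *
          ((iteratedDeriv n (fun t : ℝ => t / (Real.exp t - 1)) x : ℝ) : ℂ) =
      (-1 : ℂ) ^ n * (s - 1) * Complex.Gamma ((n : ℂ) - 1 + s) * riemannZeta s := by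
  have hre : 0 < ((n : ℂ) - 1 + s).re := by
    simp only [add_re, sub_re, natCast_re, one_re]
    linarith
  calc _ = mellin (fun t : ℝ => iteratedDeriv n bernoulliGen t) ((n : ℂ) - 1 + s) := by
        refine setIntegral_congr_fun measurableSet_Ioi fun x hx => ?_
        rw [ofReal_iteratedDeriv_div_exp_sub_one n hx, smul_eq_mul]
        ring_nf
    _ = (-1) ^ n * Complex.Gamma ((n : ℂ) - 1 + s) * riemannZeta₁ s := by
        rw [mellin_iteratedDeriv_bernoulliGen n hre]
        ring_nf
    _ = _ := by
        rw [← sub_one_mul_riemannZeta hs1]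
        ring

theorem integral_iteratedDeriv_zeta (n : ℕ) (hn : 1 ≤ n) (s : ℂ) (hs : 0 < s.re)
    (hs1 : s ≠ 1) :
    ∫ x in Set.Ioi (0 : ℝ),
        (x : ℂ) ^ ((n : ℂ) - 2 + s) *
          ((iteratedDeriv n (fun t : ℝ => t / (Real.exp t - 1)) x : ℝ) : ℂ) =
      (-1 : ℂ) ^ n * (s - 1) * Complex.Gamma ((n : ℂ) - 1 + s) * riemannZeta s := by
  have hn' : (1 : ℝ) ≤ n := Nat.one_le_cast.2 hn
  exact integral_iteratedDeriv_zeta_general n s (by linarith) hs1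
end

section
/- For every complex s with 0 < Re(s) < 1, ∫_0^∞ x^{s−1} · ( 1/(e^x − e^{−x}) − 1/(2x) ) dx = (1 − 2^{−s}) Γ(s) ζ(s). (Note 1/(e^x − e^{−x}) = (1/2)·csch(x).) -/
open Complex Real MeasureTheory

/-!
For `1 < re s`, integrating `1 / (2 sinh t) = ∑ exp (-(2 n + 1) t)` termwise against `t ^ (s - 1)`
gives `Γ(s) ∑ (2 n + 1) ^ (-s) = (1 - 2 ^ (-s)) Γ(s) ζ(s)`. The integrand has the single singular
term `1 / (2 t)` at the origin. Removing it on `(0, 1]` only, which costs `(1 / 2) / (s - 1)`,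
leaves a Mellin transform holomorphic on `0 < re s`, so the identity continues there. For
`re s < 1`, removing the rest of `1 / (2 t)` on `(1, ∞)` gives that cost back.
-/

open Set Filter Topology Asymptotics

section PuncturedConvex

lemma exists_pos_add_mul_mem_of_mem_nhds {U : Set ℂ} {a : ℂ} (hU : U ∈ 𝓝 a) (w : ℂ) :
    ∃ ε : ℝ, 0 < ε ∧ a + ε * w ∈ U := by
  have hlim : Tendsto (fun ε : ℝ ↦ a + ε * w) (𝓝[>] 0) (𝓝 a) := by
    have hcont : Continuous fun ε : ℝ ↦ a + ε * w := by fun_prop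
    simpa using (hcont.tendsto 0).mono_left nhdsWithin_le_nhds
  obtain ⟨ε, hεU, hε⟩ := ((hlim.eventually hU).and self_mem_nhdsWithin).exists
  exact ⟨ε, hε, hεU⟩

lemma isPreconnected_convex_diff_singleton {U : Set ℂ} (hU : IsOpen U) (hconv : Convex ℝ U)
    (a : ℂ) : IsPreconnected (U \ {a}) := by
  by_cases ha : a ∈ U
  swap
  · simpa [ha] using hconv.isPreconnected
  have hcover : U \ {a} = ((U ∩ {z | a.re < z.re} ∪ U ∩ {z | a.im < z.im}) ∪
      U ∩ {z | z.re < a.re}) ∪ U ∩ {z | z.im < a.im} := by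
    ext z
    simp only [Set.mem_sdiff, mem_singleton_iff, Complex.ext_iff, mem_union, mem_inter_iff,
      mem_ofPred_eq]
    grind
  obtain ⟨ε₁, hε₁, hU₁⟩ := exists_pos_add_mul_mem_of_mem_nhds (hU.mem_nhds ha) (1 + I)
  obtain ⟨ε₂, hε₂, hU₂⟩ := exists_pos_add_mul_mem_of_mem_nhds (hU.mem_nhds ha) (-1 + I)
  obtain ⟨ε₃, hε₃, hU₃⟩ := exists_pos_add_mul_mem_of_mem_nhds (hU.mem_nhds ha) (-1 - I)
  rw [hcover]
  refine IsPreconnected.union _ (Or.inr ⟨hU₃, by simpa⟩) ⟨hU₃, by simpa⟩ (IsPreconnected.union _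
    (Or.inr ⟨hU₂, by simpa⟩) ⟨hU₂, by simpa⟩ (IsPreconnected.union _
    ⟨hU₁, by simpa⟩ ⟨hU₁, by simpa⟩ ?_ ?_) ?_) ?_
  · exact (hconv.inter (convex_halfSpace_re_gt _)).isPreconnected
  · exact (hconv.inter (convex_halfSpace_im_gt _)).isPreconnected
  · exact (hconv.inter (convex_halfSpace_re_lt _)).isPreconnected
  · exact (hconv.inter (convex_halfSpace_im_lt _)).isPreconnected

end PuncturedConvex

section MellinContinuation

lemma hasMellin_congr {E : Type*} [NormedAddCommGroup E] [NormedSpace ℂ E] {f g : ℝ → E} {s : ℂ}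
    {m : E} (hfg : EqOn f g (Ioi 0)) (hg : HasMellin g s m) : HasMellin f s m := by
  have hint : EqOn (fun t : ℝ ↦ (t : ℂ) ^ (s - 1) • f t) (fun t : ℝ ↦ (t : ℂ) ^ (s - 1) • g t)
      (Ioi 0) := fun t ht ↦ congrArg _ (hfg ht)
  exact ⟨hg.1.congr_fun hint.symm measurableSet_Ioi,
    (setIntegral_congr_fun measurableSet_Ioi hint).trans hg.2⟩

lemma hasMellin_cpow_Ioi_one (a : ℂ) {s : ℂ} (hs : s.re + a.re < 0) :
    HasMellin (indicator (Ioi 1) (fun t ↦ ↑t ^ a : ℝ → ℂ)) s (-(1 / (s + a))) := by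
  have hre : (s - 1 + a).re < -1 := by
    simp only [add_re, sub_re, one_re]
    linarith
  have hint : EqOn (fun t : ℝ ↦ (t : ℂ) ^ (s - 1) • indicator (Ioi 1) (fun t ↦ ↑t ^ a : ℝ → ℂ) t)
      (indicator (Ioi 1) fun t : ℝ ↦ (t : ℂ) ^ (s - 1 + a)) (Ioi 0) := by
    intro t ht
    by_cases h : t ∈ Ioi 1
    · simp only [indicator_of_mem h, smul_eq_mul, cpow_add _ _ (ofReal_ne_zero.2 (ne_of_gt ht))]
    · simp only [indicator_of_notMem h, smul_zero]
  refine ⟨IntegrableOn.congr_fun ?_ hint.symm measurableSet_Ioi, ?_⟩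
  · exact ((integrable_indicator_iff measurableSet_Ioi).2
      (integrableOn_Ioi_cpow_of_lt hre one_pos)).integrableOn
  · rw [mellin, setIntegral_congr_fun measurableSet_Ioi hint,
      setIntegral_indicator measurableSet_Ioi, inter_eq_right.2 (Ioi_subset_Ioi zero_le_one),
      integral_Ioi_cpow_of_lt hre one_pos]
    simp [neg_div, show s - 1 + a + 1 = s + a by ring]

/-- The function `f` with the singular term `A * t ^ (-a)` subtracted on `(0, 1]` only: this removes
a power singularity at the origin without changing the behaviour of `f` at infinity. -/
noncomputable def subCpowIoc (f : ℝ → ℂ) (A a : ℂ) (t : ℝ) : ℂ :=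
  f t - A • indicator (Ioc 0 1) (fun t ↦ ↑t ^ (-a) : ℝ → ℂ) t

variable {f : ℝ → ℂ} {F : ℂ → ℂ} {A a s : ℂ} {b c : ℝ}

lemma locallyIntegrableOn_subCpowIoc (hf : LocallyIntegrableOn f (Ioi 0)) :
    LocallyIntegrableOn (subCpowIoc f A a) (Ioi 0) := by
  have hcpow : LocallyIntegrableOn (fun t ↦ ↑t ^ (-a) : ℝ → ℂ) (Ioi 0) :=
    ContinuousOn.locallyIntegrableOn (fun t ht ↦ (continuousAt_ofReal_cpow_const _ _
      (Or.inr (ne_of_gt ht))).continuousWithinAt) measurableSet_Ioi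
  have hind : LocallyIntegrableOn (indicator (Ioc 0 1) (fun t ↦ ↑t ^ (-a) : ℝ → ℂ)) (Ioi 0) := by
    intro t ht
    obtain ⟨u, hu, hint⟩ := hcpow t ht
    exact ⟨u, hu, hint.indicator measurableSet_Ioc⟩
  exact hf.sub (hind.smul A)

lemma subCpowIoc_isBigO_atTop {u : ℝ → ℝ} (hf : f =O[atTop] u) :
    subCpowIoc f A a =O[atTop] u := by
  refine hf.congr' ?_ EventuallyEq.rfl
  filter_upwards [eventually_gt_atTop 1] with t ht
  simp [subCpowIoc, ht]

lemma subCpowIoc_isBigO_nhdsGT {u : ℝ → ℝ}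
    (hf : (fun t : ℝ ↦ f t - A * (t : ℂ) ^ (-a)) =O[𝓝[>] 0] u) :
    subCpowIoc f A a =O[𝓝[>] 0] u := by
  refine hf.congr' ?_ EventuallyEq.rfl
  filter_upwards [Ioc_mem_nhdsGT one_pos] with t ht
  rw [subCpowIoc, indicator_of_mem ht, smul_eq_mul]

lemma mellin_subCpowIoc (hconv : MellinConvergent (subCpowIoc f A a) s) (hs : a.re < s.re) :
    mellin (subCpowIoc f A a) s = mellin f s - A / (s - a) := by
  have hpow := hasMellin_cpow_Ioc (-a) (s := s) (by simpa [← sub_eq_add_neg] using hs)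
  have hA := hasMellin_const_smul hpow.1 A
  have hsum := (hasMellin_add hconv hA.1).2
  simp only [subCpowIoc, sub_add_cancel, hA.2, hpow.2] at hsum
  rw [eq_sub_iff_add_eq]
  simpa [div_eq_mul_inv, sub_eq_add_neg] using hsum.symm

lemma hasMellin_sub_cpow (hconv : MellinConvergent (subCpowIoc f A a) s) (hs : s.re < a.re) :
    HasMellin (fun t : ℝ ↦ f t - A * (t : ℂ) ^ (-a)) s
      (mellin (subCpowIoc f A a) s + A / (s - a)) := by
  have hpow := hasMellin_cpow_Ioi_one (-a) (s := s) (by simpa [← sub_eq_add_neg] using hs)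
  have hA := hasMellin_const_smul hpow.1 A
  have hdiff := hasMellin_sub hconv hA.1
  rw [hA.2, hpow.2] at hdiff
  convert hasMellin_congr ?_ hdiff using 1
  · simp [div_eq_mul_inv, sub_eq_add_neg]
  · intro t (ht : 0 < t)
    rcases le_or_gt t 1 with h | h
    · simp [subCpowIoc, ht, h]
    · simp [subCpowIoc, h]

lemma eqOn_mellin_subCpowIoc_of_continuation (hf : LocallyIntegrableOn f (Ioi 0))
    (htop : f =O[atTop] (· ^ (-c)))
    (hbot : (fun t : ℝ ↦ f t - A * (t : ℂ) ^ (-a)) =O[𝓝[>] 0] (· ^ (-b)))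
    (hba : b < a.re) (hac : a.re < c) (hF : DifferentiableOn ℂ F (re ⁻¹' Ioo b c \ {a}))
    (hFf : ∀ z : ℂ, a.re < z.re → z.re < c → mellin f z = F z) :
    EqOn (mellin (subCpowIoc f A a)) (fun z ↦ F z - A / (z - a)) (re ⁻¹' Ioo b c \ {a}) := by
  have hg := locallyIntegrableOn_subCpowIoc (A := A) (a := a) hf
  have hgtop := subCpowIoc_isBigO_atTop (A := A) (a := a) htop
  have hgbot := subCpowIoc_isBigO_nhdsGT hbot
  have hstrip : IsOpen (re ⁻¹' Ioo b c) := isOpen_Ioo.preimage continuous_re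
  have hstrip_diff := hstrip.sdiff (isClosed_singleton (x := a))
  have hconn := isPreconnected_convex_diff_singleton hstrip
    ((convex_Ioo b c).linear_preimage reLm) a
  have hg_an : AnalyticOnNhd ℂ (mellin (subCpowIoc f A a)) (re ⁻¹' Ioo b c \ {a}) :=
    DifferentiableOn.analyticOnNhd (fun z hz ↦ (mellin_differentiableAt_of_isBigO_rpow hg hgtop
      hz.1.2 hgbot hz.1.1).differentiableWithinAt) hstrip_diff
  have hF_an : AnalyticOnNhd ℂ (fun z ↦ F z - A / (z - a)) (re ⁻¹' Ioo b c \ {a}) :=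
    (hF.sub (DifferentiableOn.div (by fun_prop) (by fun_prop)
      fun z hz ↦ sub_ne_zero.2 hz.2)).analyticOnNhd hstrip_diff
  obtain ⟨x, hx⟩ := exists_between hac
  have hloc : mellin (subCpowIoc f A a) =ᶠ[𝓝 (x : ℂ)] fun z ↦ F z - A / (z - a) := by
    filter_upwards [(isOpen_Ioo.preimage continuous_re).mem_nhds hx] with z ⟨haz, hzc⟩
    have hconv := mellinConvergent_of_isBigO_rpow hg hgtop hzc hgbot (hba.trans haz)
    rw [mellin_subCpowIoc hconv haz, hFf z haz hzc]
  exact hg_an.eqOn_of_preconnected_of_eventuallyEq hF_an hconn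
    ⟨⟨hba.trans hx.1, hx.2⟩, ne_of_apply_ne re hx.1.ne'⟩ hloc

theorem hasMellin_sub_cpow_of_continuation (hf : LocallyIntegrableOn f (Ioi 0))
    (htop : f =O[atTop] (· ^ (-c)))
    (hbot : (fun t : ℝ ↦ f t - A * (t : ℂ) ^ (-a)) =O[𝓝[>] 0] (· ^ (-b)))
    (hac : a.re < c) (hF : DifferentiableOn ℂ F (re ⁻¹' Ioo b c \ {a}))
    (hFf : ∀ z : ℂ, a.re < z.re → z.re < c → mellin f z = F z)
    (hbs : b < s.re) (hsa : s.re < a.re) :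
    HasMellin (fun t : ℝ ↦ f t - A * (t : ℂ) ^ (-a)) s (F s) := by
  have hsc := hsa.trans hac
  have hconv : MellinConvergent (subCpowIoc f A a) s :=
    mellinConvergent_of_isBigO_rpow (locallyIntegrableOn_subCpowIoc hf)
      (subCpowIoc_isBigO_atTop htop) hsc (subCpowIoc_isBigO_nhdsGT hbot) hbs
  have hmellin := eqOn_mellin_subCpowIoc_of_continuation hf htop hbot (hbs.trans hsa) hac hF hFf
    ⟨⟨hbs, hsc⟩, ne_of_apply_ne re hsa.ne⟩
  simpa [hmellin] using hasMellin_sub_cpow hconv hsa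

end MellinContinuation

section OddSeries

lemma hasSum_odd_of_hasSum_even {E : Type*} [NormedAddCommGroup E] [CompleteSpace E] {f : ℕ → E}
    {m m' : E} (hf : HasSum f m) (heven : HasSum (fun n ↦ f (2 * n)) m') :
    HasSum (fun n ↦ f (2 * n + 1)) (m - m') := by
  have hinj : Function.Injective fun n : ℕ ↦ 2 * n + 1 := fun m n h ↦ by simpa using h
  have hodd := (hf.summable.comp_injective hinj).hasSum
  have hm := hf.unique (heven.even_add_odd hodd)
  rwa [hm, add_sub_cancel_left]

lemma hasSum_one_div_odd_cpow {s : ℂ} (hs : 1 < s.re) :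
    HasSum (fun n : ℕ ↦ 1 / (2 * n + 1 : ℂ) ^ s) ((1 - 2 ^ (-s)) * riemannZeta s) := by
  have hzeta : HasSum (fun n : ℕ ↦ 1 / (n : ℂ) ^ s) (riemannZeta s) := by
    rw [zeta_eq_tsum_one_div_nat_cpow hs]
    exact (Complex.summable_one_div_nat_cpow.2 hs).hasSum
  have heven : HasSum (fun n : ℕ ↦ 1 / ((2 * n : ℕ) : ℂ) ^ s) (2 ^ (-s) * riemannZeta s) := by
    refine (hzeta.mul_left ((2 : ℂ) ^ (-s))).congr_fun fun n ↦ ?_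
    rw [Nat.cast_mul, natCast_mul_natCast_cpow, cpow_neg, Nat.cast_ofNat, one_div, mul_inv, one_div]
  rw [sub_mul, one_mul]
  exact (hasSum_odd_of_hasSum_even hzeta heven).congr_fun fun n ↦ by push_cast; rfl

lemma hasSum_exp_neg_odd_mul {t : ℝ} (ht : 0 < t) :
    HasSum (fun n : ℕ ↦ Real.exp (-(2 * n + 1) * t)) (2 * Real.sinh t)⁻¹ := by
  have hgeom := (hasSum_geometric_of_lt_one (Real.exp_nonneg (-2 * t))
    (Real.exp_lt_one_iff.2 (by linarith))).mul_left (Real.exp (-t))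
  have hsinh : 2 * Real.sinh t = Real.exp t * (1 - Real.exp (-2 * t)) := by
    rw [Real.sinh_eq, mul_sub, ← Real.exp_add]
    ring_nf
  rw [hsinh, mul_inv, ← Real.exp_neg]
  refine hgeom.congr_fun fun n ↦ ?_
  rw [← Real.exp_nat_mul, ← Real.exp_add]
  ring_nf

lemma mellin_inv_two_mul_sinh {s : ℂ} (hs : 1 < s.re) :
    mellin (fun t ↦ (((2 * Real.sinh t)⁻¹ : ℝ) : ℂ)) s =
      (1 - (2 : ℂ) ^ (-s)) * Complex.Gamma s * riemannZeta s := by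
  have hodd := hasSum_one_div_odd_cpow hs
  have hsum : Summable fun n : ℕ ↦ ‖(1 : ℂ)‖ / (2 * n + 1 : ℝ) ^ s.re := by
    refine hodd.summable.norm.congr fun n ↦ ?_
    rw [norm_div, norm_one, ← norm_cpow_eq_rpow_re_of_pos (by positivity)]
    push_cast
    rfl
  have hmellin := hasSum_mellin (fun n ↦ Or.inr (by positivity)) (one_pos.trans hs)
    (F := fun t ↦ ((2 * Real.sinh t)⁻¹ : ℝ)) (fun t ht ↦ by
      simpa using Complex.hasSum_ofReal.2 (hasSum_exp_neg_odd_mul ht)) hsum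
  rw [mul_right_comm, mul_comm]
  refine hmellin.unique ((hodd.mul_left (Complex.Gamma s)).congr_fun fun n ↦ ?_)
  push_cast
  ring

end OddSeries

section Sinh

lemma locallyIntegrableOn_inv_two_mul_sinh :
    LocallyIntegrableOn (fun t ↦ (((2 * Real.sinh t)⁻¹ : ℝ) : ℂ)) (Ioi 0) := by
  refine ContinuousOn.locallyIntegrableOn ?_ measurableSet_Ioi
  refine continuous_ofReal.comp_continuousOn (ContinuousOn.inv₀ (by fun_prop) fun t ht ↦ ?_)
  have : 0 < Real.sinh t := Real.sinh_pos_iff.2 ht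
  positivity

lemma inv_two_mul_sinh_isBigO_exp_neg :
    (fun t ↦ (2 * Real.sinh t)⁻¹) =O[atTop] fun t ↦ Real.exp (-1 * t) := by
  refine IsBigO.of_bound 2 ?_
  filter_upwards [eventually_ge_atTop 1] with t ht
  have hexp : Real.exp t ≤ 2 * (2 * Real.sinh t) := by
    rw [Real.sinh_eq]
    have := Real.add_one_le_exp t
    have := Real.exp_le_one_iff.2 (by linarith : -t ≤ 0)
    linarith
  have hsinh : 0 < 2 * Real.sinh t := by linarith [Real.exp_pos t]
  rw [Real.norm_of_nonneg (by positivity), Real.norm_of_nonneg (by positivity), neg_one_mul,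
    Real.exp_neg, ← div_eq_mul_inv, inv_le_comm₀ hsinh (by positivity), inv_div]
  linarith

lemma inv_two_mul_sinh_isBigO_rpow (c : ℝ) :
    (fun t ↦ (((2 * Real.sinh t)⁻¹ : ℝ) : ℂ)) =O[atTop] (· ^ c : ℝ → ℝ) :=
  isBigO_ofReal_left.2 <|
    inv_two_mul_sinh_isBigO_exp_neg.trans (isLittleO_exp_neg_mul_rpow_atTop one_pos c).isBigO

lemma sinh_le_mul_exp (t : ℝ) : Real.sinh t ≤ t * Real.exp t := by
  have hexp : Real.exp t * (1 - 2 * t) ≤ Real.exp (-t) := calc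
    Real.exp t * (1 - 2 * t) ≤ Real.exp t * Real.exp (-2 * t) := by
      gcongr
      linarith [Real.add_one_le_exp (-2 * t)]
    _ = Real.exp (-t) := by rw [← Real.exp_add]; ring_nf
  rw [Real.sinh_eq]
  linarith

lemma sinh_sub_self_le {t : ℝ} (ht : 0 ≤ t) : Real.sinh t - t ≤ 2 * t * Real.sinh t := by
  have hexp : Real.exp (-t) ≤ 1 := Real.exp_le_one_iff.2 (by linarith)
  calc Real.sinh t - t ≤ t * (Real.exp t - 1) := by linarith [sinh_le_mul_exp t]
    _ ≤ t * (Real.exp t - Real.exp (-t)) := by gcongr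
    _ = 2 * t * Real.sinh t := by rw [Real.sinh_eq]; ring

lemma abs_inv_two_mul_sinh_sub_le_one {t : ℝ} (ht : 0 < t) :
    |(2 * Real.sinh t)⁻¹ - (2 * t)⁻¹| ≤ 1 := by
  have hle : t ≤ Real.sinh t := Real.self_le_sinh_iff.2 ht.le
  have hsinh : 0 < 2 * Real.sinh t := by linarith
  rw [abs_sub_comm, abs_of_nonneg (sub_nonneg.2 (by gcongr)),
    inv_sub_inv (by positivity) hsinh.ne', div_le_one (by positivity)]
  calc 2 * Real.sinh t - 2 * t = 2 * (Real.sinh t - t) := by ring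
    _ ≤ 2 * (2 * t * Real.sinh t) := by gcongr; exact sinh_sub_self_le ht.le
    _ = 2 * t * (2 * Real.sinh t) := by ring

lemma inv_two_mul_sinh_sub_isBigO_nhdsGT :
    (fun t ↦ (((2 * Real.sinh t)⁻¹ : ℝ) : ℂ) - 1 / 2 * (t : ℂ) ^ (-1 : ℂ)) =O[𝓝[>] 0]
      (· ^ (-0 : ℝ) : ℝ → ℝ) := by
  refine IsBigO.of_bound 1 ?_
  filter_upwards [self_mem_nhdsWithin] with t ht
  have hcast : ((2 * Real.sinh t)⁻¹ : ℝ) - 1 / 2 * (t : ℂ) ^ (-1 : ℂ) =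
      (((2 * Real.sinh t)⁻¹ - (2 * t)⁻¹ : ℝ) : ℂ) := by
    rw [cpow_neg_one]
    push_cast
    ring
  rw [hcast, norm_real]
  simpa using abs_inv_two_mul_sinh_sub_le_one ht

end Sinh

lemma differentiableAt_one_sub_two_cpow_mul_Gamma_mul_zeta {s : ℂ} (hs : 0 < s.re) (hs1 : s ≠ 1) :
    DifferentiableAt ℂ (fun z ↦ (1 - (2 : ℂ) ^ (-z)) * Complex.Gamma z * riemannZeta z) s := by
  have hGamma : DifferentiableAt ℂ Complex.Gamma s := by
    refine Complex.differentiableAt_Gamma s fun m hm ↦ hs.not_ge ?_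
    simp [hm]
  have hpow : DifferentiableAt ℂ (fun z : ℂ ↦ (2 : ℂ) ^ (-z)) s :=
    differentiableAt_id.neg.const_cpow (Or.inl two_ne_zero)
  exact ((hpow.const_sub 1).mul hGamma).mul (differentiableAt_riemannZeta hs1)

theorem integral_csch_zeta (s : ℂ) (h0 : 0 < s.re) (h1 : s.re < 1) :
    ∫ x in Set.Ioi (0 : ℝ),
        (x : ℂ) ^ (s - 1) * ((1 / (Real.exp x - Real.exp (-x)) - 1 / (2 * x) : ℝ) : ℂ) =
      (1 - (2 : ℂ) ^ (-s)) * Complex.Gamma s * riemannZeta s := by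
  have hF : DifferentiableOn ℂ (fun z ↦ (1 - (2 : ℂ) ^ (-z)) * Complex.Gamma z * riemannZeta z)
      (re ⁻¹' Ioo 0 2 \ {1}) := fun z hz ↦
    (differentiableAt_one_sub_two_cpow_mul_Gamma_mul_zeta hz.1.1 hz.2).differentiableWithinAt
  have hmellin := hasMellin_sub_cpow_of_continuation locallyIntegrableOn_inv_two_mul_sinh
    (inv_two_mul_sinh_isBigO_rpow (-2)) inv_two_mul_sinh_sub_isBigO_nhdsGT one_lt_two hF
    (fun z hz _ ↦ mellin_inv_two_mul_sinh hz) h0 h1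
  rw [← hmellin.2, mellin]
  refine setIntegral_congr_fun measurableSet_Ioi fun x _ ↦ ?_
  simp only [smul_eq_mul, cpow_neg_one, Real.sinh_eq]
  push_cast
  ring
end

section
/- For every complex s with Re(s) > 0 and s ≠ 1, the series Σ_{k=1}^∞ [ (6k−5)^{−s} − 2·(6k−3)^{−s} + (6k−1)^{−s} ] converges and its sum equals (1 − 3^{1−s})(1 − 2^{−s}) ζ(s). -/
open Complex Finset

/-!
For `Re s > 1` the product `(1 - 3 · 3⁻ˢ)(1 - 2⁻ˢ) ζ(s)` is the Dirichlet series whose coefficients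
arise from the constant sequence `1` by two sieving steps `f(n) ↦ f(n) - c [d ∣ n] f(n / d)`, first
with `c = 1, d = 2`, then with `c = d = 3`. They have period `6` with values `1, 0, -2, 0, 1, 0`.
These values add up to zero, so comparing each term of a block of length `6` with the first
one bounds the block by `O(|s| k ^ (-Re s - 1))`. Hence the series of blocks is holomorphic on
`Re s > 0`, and the identity extends there after multiplication by `s - 1`.
-/

lemma hasSum_sum_range_mul_add {M : Type*} [AddCommMonoid M] [TopologicalSpace M] [ContinuousAdd M]
    [RegularSpace M] (N : ℕ) [NeZero N] {g : ℕ → M} {a : M} (hg : HasSum g a) :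
    HasSum (fun k ↦ ∑ j ∈ range N, g (N * k + j)) a := by
  have hprod := (Nat.divModEquiv N).symm.hasSum_iff.mpr hg
  refine hprod.prod_fiberwise fun k ↦ ?_
  simpa [← Fin.sum_univ_eq_sum_range (fun j ↦ g (N * k + j)), mul_comm] using
    hasSum_fintype fun j : Fin N ↦ (g ∘ (Nat.divModEquiv N).symm) (k, j)

section Dilation

/-- The coefficients of the Dirichlet series `d⁻ˢ ∑ f(m) m⁻ˢ = ∑ f(m) (d m)⁻ˢ`: the sequence `f`
moved to the multiples of `d`. -/
def dilate (d : ℕ) (f : ℕ → ℂ) (n : ℕ) : ℂ := if d ∣ n then f (n / d) else 0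

lemma LSeries_term_dilate_mul {d : ℕ} (hd : d ≠ 0) (f : ℕ → ℂ) (s : ℂ) (m : ℕ) :
    LSeries.term (dilate d f) s (d * m) = (d : ℂ) ^ (-s) * LSeries.term f s m := by
  rcases eq_or_ne m 0 with rfl | hm
  · simp
  · rw [LSeries.term_of_ne_zero (mul_ne_zero hd hm), LSeries.term_of_ne_zero hm, dilate,
      if_pos (dvd_mul_right d m), Nat.mul_div_cancel_left m (Nat.pos_of_ne_zero hd), Nat.cast_mul,
      natCast_mul_natCast_cpow, cpow_neg, div_mul_eq_div_div_swap, div_eq_inv_mul _ ((d : ℂ) ^ s)]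

lemma LSeriesHasSum_dilate {d : ℕ} (hd : d ≠ 0) {f : ℕ → ℂ} {s a : ℂ}
    (hf : LSeriesHasSum f s a) : LSeriesHasSum (dilate d f) s ((d : ℂ) ^ (-s) * a) := by
  have hinj : Function.Injective (d * ·) := mul_right_injective₀ hd
  refine (hinj.hasSum_iff fun n hn ↦ ?_).mp ?_
  · have hdn : ¬ d ∣ n := fun ⟨m, hm⟩ ↦ hn ⟨m, hm.symm⟩
    simp [LSeries.term_def, dilate, hdn]
  · simpa only [Function.comp_def, LSeries_term_dilate_mul hd] using hf.mul_left ((d : ℂ) ^ (-s))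

/-- The coefficients of the Dirichlet series `(1 - c d⁻ˢ) ∑ f(m) m⁻ˢ`. -/
def sieve (c : ℂ) (d : ℕ) (f : ℕ → ℂ) : ℕ → ℂ := f - c • dilate d f

lemma sieve_apply (c : ℂ) (d : ℕ) (f : ℕ → ℂ) (n : ℕ) :
    sieve c d f n = f n - c * if d ∣ n then f (n / d) else 0 := rfl

lemma LSeriesHasSum_sieve (c : ℂ) {d : ℕ} (hd : d ≠ 0) {f : ℕ → ℂ} {s a : ℂ}
    (hf : LSeriesHasSum f s a) :
    LSeriesHasSum (sieve c d f) s ((1 - c * (d : ℂ) ^ (-s)) * a) := by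
  rw [sub_mul, one_mul, mul_assoc]
  exact hf.sub ((LSeriesHasSum_dilate hd hf).smul c)

end Dilation

section Blocks

lemma norm_ofReal_cpow_neg_sub_le {s : ℂ} (hs : -1 ≤ s.re) {a b : ℝ} (ha : 0 < a) (hab : a ≤ b) :
    ‖(b : ℂ) ^ (-s) - (a : ℂ) ^ (-s)‖ ≤ ‖s‖ * a ^ (-s.re - 1) * (b - a) := by
  rcases eq_or_ne s 0 with rfl | hs0
  · simp
  refine norm_image_sub_le_of_norm_deriv_le_segment' (f := fun x : ℝ ↦ (x : ℂ) ^ (-s))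
    (f' := fun x : ℝ ↦ -s * (x : ℂ) ^ (-s - 1)) (fun x hx ↦ ?_) (fun x hx ↦ ?_)
    b (Set.right_mem_Icc.mpr hab)
  · have hx0 : x ≠ 0 := (ha.trans_le hx.1).ne'
    exact (hasDerivAt_ofReal_cpow_const hx0 (neg_ne_zero.mpr hs0)).hasDerivWithinAt
  · rw [norm_mul, norm_neg, norm_cpow_eq_rpow_re_of_pos (ha.trans_le hx.1), sub_re, neg_re, one_re]
    have hpow : x ^ (-s.re - 1) ≤ a ^ (-s.re - 1) :=
      Real.rpow_le_rpow_of_nonpos ha hx.1 (by linarith)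
    gcongr

/-- The `k`-th block of `N` consecutive terms of the Dirichlet series `∑ f(n) n⁻ˢ`, that is
`N k < n ≤ N (k + 1)`. -/
noncomputable def dirichletBlock (f : ℕ → ℂ) (N : ℕ) (s : ℂ) (k : ℕ) : ℂ :=
  ∑ j ∈ range N, f (N * k + j + 1) * ((N * k + j + 1 : ℕ) : ℂ) ^ (-s)

variable {f : ℕ → ℂ} {N : ℕ} {C : ℝ}

lemma differentiable_dirichletBlock (f : ℕ → ℂ) (N k : ℕ) :
    Differentiable ℂ fun s ↦ dirichletBlock f N s k := by
  refine Differentiable.fun_sum fun j _ ↦ Differentiable.const_mul (fun s ↦ ?_) _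
  exact differentiableAt_id.neg.const_cpow (Or.inl (Nat.cast_ne_zero.mpr (Nat.succ_ne_zero _)))

lemma hasSum_dirichletBlock_of_LSeriesHasSum [NeZero N] {s a : ℂ} (hf : LSeriesHasSum f s a) :
    HasSum (dirichletBlock f N s) a := by
  have hshift : HasSum (fun n ↦ LSeries.term f s (n + 1)) a :=
    (hasSum_nat_add_iff 1).mpr (by simpa using! hf)
  convert hasSum_sum_range_mul_add N hshift using 3 with k
  refine sum_congr rfl fun j _ ↦ ?_
  rw [LSeries.term_of_ne_zero (Nat.succ_ne_zero _), cpow_neg, div_eq_mul_inv]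

lemma dirichletBlock_eq_sum_mul_sub {k : ℕ} (hzero : ∑ j ∈ range N, f (N * k + j + 1) = 0)
    (s z : ℂ) : dirichletBlock f N s k =
      ∑ j ∈ range N, f (N * k + j + 1) * (((N * k + j + 1 : ℕ) : ℂ) ^ (-s) - z) := by
  simp only [mul_sub, sum_sub_distrib, ← sum_mul, hzero, zero_mul, sub_zero, dirichletBlock]

lemma norm_dirichletBlock_le (hf : ∀ n ≠ 0, ‖f n‖ ≤ C) {k : ℕ}
    (hzero : ∑ j ∈ range N, f (N * k + j + 1) = 0) {s : ℂ} (hs : -1 ≤ s.re) :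
    ‖dirichletBlock f N s k‖ ≤ N ^ 2 * C * (‖s‖ * (N * k + 1 : ℝ) ^ (-s.re - 1)) := by
  have hC : 0 ≤ C := (norm_nonneg _).trans (hf 1 one_ne_zero)
  have hterm : ∀ j ∈ range N,
      ‖f (N * k + j + 1) * (((N * k + j + 1 : ℕ) : ℂ) ^ (-s) - ((N * k + 1 : ℝ) : ℂ) ^ (-s))‖ ≤
        C * (‖s‖ * (N * k + 1 : ℝ) ^ (-s.re - 1) * N) := fun j hj ↦ by
    have hjN : (j : ℝ) ≤ N := by exact_mod_cast (mem_range.mp hj).le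
    have hdiff := norm_ofReal_cpow_neg_sub_le hs (a := N * k + 1) (b := (N * k + j + 1 : ℕ))
      (by positivity) (by push_cast; linarith [j.cast_nonneg (α := ℝ)])
    rw [norm_mul]
    refine mul_le_mul (hf _ (Nat.succ_ne_zero _)) (hdiff.trans ?_) (norm_nonneg _) hC
    gcongr
    push_cast
    linarith
  rw [dirichletBlock_eq_sum_mul_sub hzero s (((N * k + 1 : ℝ) : ℂ) ^ (-s))]
  refine (norm_sum_le_of_le _ hterm).trans_eq ?_
  rw [sum_const, card_range, nsmul_eq_mul]
  ring

lemma norm_dirichletBlock_le_of_le_re [NeZero N] (hf : ∀ n ≠ 0, ‖f n‖ ≤ C) {k : ℕ}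
    (hzero : ∑ j ∈ range N, f (N * k + j + 1) = 0) {s : ℂ} {ε R : ℝ} (hε : -1 ≤ ε)
    (hs : ε ≤ s.re) (hR : ‖s‖ ≤ R) :
    ‖dirichletBlock f N s k‖ ≤ N ^ 2 * C * (R * (k + 1 : ℝ) ^ (-ε - 1)) := by
  have hC : 0 ≤ C := (norm_nonneg _).trans (hf 1 one_ne_zero)
  have hN : (1 : ℝ) ≤ N := by exact_mod_cast NeZero.one_le
  have hbase : (k + 1 : ℝ) ≤ N * k + 1 := by
    gcongr
    exact le_mul_of_one_le_left k.cast_nonneg hN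
  have hpow : (N * k + 1 : ℝ) ^ (-s.re - 1) ≤ (k + 1 : ℝ) ^ (-ε - 1) :=
    calc (N * k + 1 : ℝ) ^ (-s.re - 1)
        ≤ (N * k + 1 : ℝ) ^ (-ε - 1) :=
          Real.rpow_le_rpow_of_exponent_le (by linarith) (by linarith)
      _ ≤ (k + 1 : ℝ) ^ (-ε - 1) :=
          Real.rpow_le_rpow_of_nonpos (by linarith) hbase (by linarith)
  refine (norm_dirichletBlock_le hf hzero (hε.trans hs)).trans ?_
  have hR0 : 0 ≤ R := (norm_nonneg s).trans hR
  gcongr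

lemma summable_const_mul_succ_rpow_neg_sub_one (c R : ℝ) {ε : ℝ} (hε : 0 < ε) :
    Summable fun k : ℕ ↦ c * (R * (k + 1 : ℝ) ^ (-ε - 1)) := by
  have hsum : Summable fun n : ℕ ↦ (n : ℝ) ^ (-ε - 1) :=
    Real.summable_nat_rpow.mpr (by linarith)
  simpa using (((summable_nat_add_iff 1).mpr hsum).mul_left R).mul_left c

lemma summable_dirichletBlock [NeZero N] (hf : ∀ n ≠ 0, ‖f n‖ ≤ C)
    (hzero : ∀ k, ∑ j ∈ range N, f (N * k + j + 1) = 0) {s : ℂ} (hs : 0 < s.re) :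
    Summable (dirichletBlock f N s) :=
  .of_norm_bounded (summable_const_mul_succ_rpow_neg_sub_one _ _ hs) fun k ↦
    norm_dirichletBlock_le_of_le_re hf (hzero k) (by linarith) le_rfl le_rfl

lemma differentiableOn_tsum_dirichletBlock [NeZero N] (hf : ∀ n ≠ 0, ‖f n‖ ≤ C)
    (hzero : ∀ k, ∑ j ∈ range N, f (N * k + j + 1) = 0) :
    DifferentiableOn ℂ (fun s ↦ ∑' k, dirichletBlock f N s k) {s | 0 < s.re} := by
  intro z (hz : 0 < z.re)
  let V : Set ℂ := {w | z.re / 2 < w.re} ∩ {w | ‖w‖ < ‖z‖ + 1}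
  have hV : IsOpen V :=
    (isOpen_lt continuous_const continuous_re).inter (isOpen_lt continuous_norm continuous_const)
  have hzV : z ∈ V := ⟨half_lt_self hz, lt_add_one ‖z‖⟩
  have hdiff : DifferentiableOn ℂ (fun s ↦ ∑' k, dirichletBlock f N s k) V :=
    differentiableOn_tsum_of_summable_norm
      (summable_const_mul_succ_rpow_neg_sub_one _ (‖z‖ + 1) (half_pos hz))
      (fun k ↦ (differentiable_dirichletBlock f N k).differentiableOn) hV
      fun k _ hw ↦ norm_dirichletBlock_le_of_le_re hf (hzero k) (by linarith) hw.1.le hw.2.le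
  exact (hdiff.differentiableAt (hV.mem_nhds hzV)).differentiableWithinAt

theorem mul_tsum_dirichletBlock_eq_of_mul_LSeries_eq [NeZero N] (hf : ∀ n ≠ 0, ‖f n‖ ≤ C)
    (hzero : ∀ k, ∑ j ∈ range N, f (N * k + j + 1) = 0) {P Q : ℂ → ℂ}
    (hP : DifferentiableOn ℂ P {s | 0 < s.re}) (hQ : DifferentiableOn ℂ Q {s | 0 < s.re})
    (hPQ : ∀ s : ℂ, 1 < s.re → P s * LSeries f s = Q s) {s : ℂ} (hs : 0 < s.re) :
    P s * ∑' k, dirichletBlock f N s k = Q s := by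
  have hopen : IsOpen {s : ℂ | 0 < s.re} := isOpen_lt continuous_const continuous_re
  have hnhds : {w : ℂ | 1 < w.re} ∈ nhds 2 :=
    (isOpen_lt continuous_const continuous_re).mem_nhds (by simp)
  refine AnalyticOnNhd.eqOn_of_preconnected_of_eventuallyEq (z₀ := 2)
    ((hP.mul (differentiableOn_tsum_dirichletBlock hf hzero)).analyticOnNhd hopen)
    (hQ.analyticOnNhd hopen) (convex_halfSpace_re_gt 0).isPreconnected (by simp) ?_ hs
  filter_upwards [hnhds] with w hw
  have hsum := LSeriesSummable_of_bounded_of_one_lt_re (fun n hn ↦ hf n hn) hw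
  rw [Pi.mul_apply, (hasSum_dirichletBlock_of_LSeriesHasSum hsum.LSeriesHasSum).tsum_eq, hPQ w hw]

end Blocks

section SixPeriod

/-- The indicator function of the odd numbers, obtained by sieving out the multiples of `2`. -/
def oddCoeff : ℕ → ℂ := sieve 1 2 1

/-- The coefficients of the Dirichlet series `(1 - 3 · 3⁻ˢ) (1 - 2⁻ˢ) ζ(s)`. -/
def sixPeriodCoeff : ℕ → ℂ := sieve 3 3 oddCoeff

lemma oddCoeff_apply (n : ℕ) : oddCoeff n = if n % 2 = 1 then 1 else 0 := by
  rcases Nat.mod_two_eq_zero_or_one n with h | h <;>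
    simp [oddCoeff, sieve_apply, Nat.dvd_iff_mod_eq_zero, h]

lemma sixPeriodCoeff_apply (n : ℕ) :
    sixPeriodCoeff n = if n % 2 = 1 then if n % 3 = 0 then -2 else 1 else 0 := by
  simp only [sixPeriodCoeff, sieve_apply, oddCoeff_apply, Nat.dvd_iff_mod_eq_zero]
  split_ifs <;> first | omega | norm_num

lemma norm_sixPeriodCoeff_le (n : ℕ) : ‖sixPeriodCoeff n‖ ≤ 2 := by
  rw [sixPeriodCoeff_apply]
  split_ifs <;> norm_num

lemma sum_sixPeriodCoeff_mul (g : ℕ → ℂ) (k : ℕ) :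
    ∑ j ∈ range 6, sixPeriodCoeff (6 * k + j + 1) * g (6 * k + j + 1) =
      g (6 * k + 1) - 2 * g (6 * k + 3) + g (6 * k + 5) := by
  have hmod2 (j : ℕ) : (6 * k + j + 1) % 2 = (j + 1) % 2 := by omega
  have hmod3 (j : ℕ) : (6 * k + j + 1) % 3 = (j + 1) % 3 := by omega
  simp only [sixPeriodCoeff_apply, hmod2, hmod3, sum_range_succ, sum_range_zero]
  norm_num
  ring

lemma sum_sixPeriodCoeff (k : ℕ) : ∑ j ∈ range 6, sixPeriodCoeff (6 * k + j + 1) = 0 := by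
  have h := sum_sixPeriodCoeff_mul 1 k
  norm_num at h
  exact h

lemma LSeries_sixPeriodCoeff {s : ℂ} (hs : 1 < s.re) :
    LSeries sixPeriodCoeff s = (1 - (3 : ℂ) ^ (1 - s)) * (1 - (2 : ℂ) ^ (-s)) * riemannZeta s := by
  have hodd : LSeriesHasSum oddCoeff s _ := LSeriesHasSum_sieve 1 two_ne_zero (LSeriesHasSum_one hs)
  have hsix : LSeriesHasSum sixPeriodCoeff s _ := LSeriesHasSum_sieve 3 three_ne_zero hodd
  have hthree : (3 : ℂ) ^ (1 - s) = 3 * 3 ^ (-s) := by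
    rw [sub_eq_add_neg, cpow_add _ _ three_ne_zero, cpow_one]
  simpa [hthree, mul_assoc] using hsix.LSeries_eq

theorem tsum_dirichletBlock_sixPeriodCoeff {s : ℂ} (hs : 0 < s.re) (hs1 : s ≠ 1) :
    ∑' k, dirichletBlock sixPeriodCoeff 6 s k =
      (1 - (3 : ℂ) ^ (1 - s)) * (1 - (2 : ℂ) ^ (-s)) * riemannZeta s := by
  have hzeta {w : ℂ} (hw : w ≠ 1) : (w - 1) * riemannZeta w = riemannZeta₁ w := by
    rw [riemannZeta_eq_inv_sub_mul hw, mul_inv_cancel_left₀ (sub_ne_zero.mpr hw)]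
  have hfactor : Differentiable ℂ fun w : ℂ ↦ (1 - (3 : ℂ) ^ (1 - w)) * (1 - (2 : ℂ) ^ (-w)) :=
    fun w ↦ by fun_prop (disch := norm_num)
  have hmul := mul_tsum_dirichletBlock_eq_of_mul_LSeries_eq
    (fun n _ ↦ norm_sixPeriodCoeff_le n) sum_sixPeriodCoeff
    (differentiableOn_id.sub_const 1)
    (hfactor.mul differentiable_riemannZeta₁).differentiableOn
    (fun w hw ↦ ?_) hs
  · refine mul_left_cancel₀ (sub_ne_zero.mpr hs1) (hmul.trans ?_)
    rw [Pi.mul_apply, ← hzeta hs1]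
    ring
  · have hw1 : w ≠ 1 := by
      rintro rfl
      simp at hw
    rw [Pi.mul_apply, LSeries_sixPeriodCoeff hw, ← hzeta hw1, id_eq]
    ring

end SixPeriod

theorem zeta_six_period_series (s : ℂ) (hs : 0 < s.re) (hs1 : s ≠ 1) :
    HasSum
      (fun k : ℕ =>
        ((6 * (k + 1) - 5 : ℕ) : ℂ) ^ (-s) - 2 * ((6 * (k + 1) - 3 : ℕ) : ℂ) ^ (-s) +
          ((6 * (k + 1) - 1 : ℕ) : ℂ) ^ (-s))
      ((1 - (3 : ℂ) ^ (1 - s)) * (1 - (2 : ℂ) ^ (-s)) * riemannZeta s) := by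
  have hsum : Summable (dirichletBlock sixPeriodCoeff 6 s) :=
    summable_dirichletBlock (fun n _ ↦ norm_sixPeriodCoeff_le n) sum_sixPeriodCoeff hs
  rw [← tsum_dirichletBlock_sixPeriodCoeff hs hs1]
  convert hsum.hasSum using 2 with k
  exact (sum_sixPeriodCoeff_mul (fun n ↦ (n : ℂ) ^ (-s)) k).symm
end
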